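/- arXiv:1406.5441 — 5 statements merged into one kernel-verified Lean document; each statement's English description precedes it below -/
import Mathlib

section
/- Let d be a positive integer, M ∈ ℂ^{d×d} an Hermitian matrix with eigenvalues λ₁ ≥ … ≥ λ_d, c ∈ ℝ, and a ∈ ℂ^d. Let A be the (d+1)×(d+1) Hermitian bordered matrix A = [[c, a*], [a, M]] and set η₁ = |c − λ₁|. Then λ_max(A) − max(c, λ₁) ≤ 2‖a‖₂² / (η₁ + √(η₁² + 4‖a‖₂²)). -/
/-!
Let `μ` be an eigenvalue of `A` with eigenvector `(x, y)`, and suppose `μ > max c λ₁`. The two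
block rows of `A (x, y) = μ (x, y)` read `(μ - c) x = a* y` and `(μ - M) y = x a`. Cauchy–Schwarz
gives `(μ - c) |x| ≤ ‖a‖ ‖y‖`, and since `μ - M ≥ μ - λ₁ > 0`
(`sub_mul_norm_le_of_eigenvalues_le`), the second row gives `(μ - λ₁) ‖y‖ ≤ |x| ‖a‖`. As `y ≠ 0`
(otherwise `x = 0` too), multiplying yields `(μ - c) (μ - λ₁) ≤ ‖a‖²`
(`bordered_eigenvalue_mul_le`). With `δ = μ - max c λ₁` the left side is `δ (δ + η₁)`, so `δ` is at
most the positive root of `δ² + η₁ δ = ‖a‖²`, which in rationalised form is the claimed bound.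
-/

/-- If `μ > l` and `l` bounds the eigenvalues of the Hermitian matrix `M` from above, then `μ - M`
expands norms by at least the factor `μ - l`. Here `w = (μ - M) y`; the bound is proved coordinatewise in an eigenbasis of `M`. -/
lemma sub_mul_norm_le_of_eigenvalues_le {d : ℕ} {M : Matrix (Fin d) (Fin d) ℂ}
    (hM : M.IsHermitian) {l μ : ℝ} (hl : ∀ i, hM.eigenvalues i ≤ l) (hμ : l < μ)
    (y w : EuclideanSpace ℂ (Fin d))
    (hw : Matrix.toEuclideanLin M y + w = (μ : ℂ) • y) :
    (μ - l) * ‖y‖ ≤ ‖w‖ := by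
  have hcoord : ∀ i, inner ℂ (hM.eigenvectorBasis i) w
      = ((μ - hM.eigenvalues i : ℝ) : ℂ) * inner ℂ (hM.eigenvectorBasis i) y := by
    intro i
    have hb : Matrix.toEuclideanLin M (hM.eigenvectorBasis i)
        = (hM.eigenvalues i : ℂ) • hM.eigenvectorBasis i := by
      ext j
      have := congrFun (hM.mulVec_eigenvectorBasis i) j
      simpa [Matrix.toLpLin_apply] using this
    have hs : inner ℂ (hM.eigenvectorBasis i) (Matrix.toEuclideanLin M y)
        = (hM.eigenvalues i : ℂ) * inner ℂ (hM.eigenvectorBasis i) y := by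
      rw [← (Matrix.isSymmetric_toEuclideanLin_iff.mpr hM) (hM.eigenvectorBasis i) y, hb,
        inner_smul_left]
      simp
    have h := congrArg (inner ℂ (hM.eigenvectorBasis i)) hw
    rw [inner_add_right, inner_smul_right, hs] at h
    push_cast
    linear_combination h
  have hsq : ((μ - l) * ‖y‖) ^ 2 ≤ ‖w‖ ^ 2 := by
    rw [mul_pow, ← hM.eigenvectorBasis.sum_sq_norm_inner_right y,
      ← hM.eigenvectorBasis.sum_sq_norm_inner_right w, Finset.mul_sum]
    refine Finset.sum_le_sum fun i _ => ?_
    rw [hcoord i, norm_mul, mul_pow, Complex.norm_real, Real.norm_eq_abs, sq_abs]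
    have := hl i
    gcongr
  exact le_of_sq_le_sq hsq (norm_nonneg _)

/-- The secular inequality for an eigenvector `(x, y)` of the bordered matrix, with the two block
rows of the eigenvalue equation as hypotheses. -/
lemma bordered_eigenvalue_mul_le {d : ℕ} {M : Matrix (Fin d) (Fin d) ℂ}
    (hM : M.IsHermitian) {c l μ : ℝ} (hl : ∀ i, hM.eigenvalues i ≤ l) (hμl : l < μ) (hμc : c < μ)
    (a y : EuclideanSpace ℂ (Fin d)) (x : ℂ) (hne : x ≠ 0 ∨ y ≠ 0)
    (h₁ : (c : ℂ) * x + inner ℂ a y = μ * x)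
    (h₂ : Matrix.toEuclideanLin M y + x • a = (μ : ℂ) • y) :
    (μ - c) * (μ - l) ≤ ‖a‖ ^ 2 := by
  have hx : (μ - c) * ‖x‖ ≤ ‖a‖ * ‖y‖ := by
    have h : inner ℂ a y = ((μ - c : ℝ) : ℂ) * x := by
      push_cast
      linear_combination h₁
    have h' := norm_inner_le_norm (𝕜 := ℂ) a y
    rwa [h, norm_mul, Complex.norm_real, Real.norm_eq_abs, abs_of_pos (sub_pos.mpr hμc)] at h'
  have hy : (μ - l) * ‖y‖ ≤ ‖x‖ * ‖a‖ := by
    simpa [norm_smul] using sub_mul_norm_le_of_eigenvalues_le hM hl hμl y (x • a) h₂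
  have hypos : 0 < ‖y‖ := by
    rw [norm_pos_iff]
    rintro rfl
    have hx0 : x ≠ 0 := by simpa using hne
    have := mul_pos (sub_pos.mpr hμc) (norm_pos_iff.mpr hx0)
    simp only [norm_zero, mul_zero] at hx
    linarith
  refine le_of_mul_le_mul_right ?_ hypos
  calc (μ - c) * (μ - l) * ‖y‖ = (μ - c) * ((μ - l) * ‖y‖) := by ring
    _ ≤ (μ - c) * (‖x‖ * ‖a‖) := mul_le_mul_of_nonneg_left hy (sub_pos.mpr hμc).le
    _ = ((μ - c) * ‖x‖) * ‖a‖ := by ring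
    _ ≤ (‖a‖ * ‖y‖) * ‖a‖ := mul_le_mul_of_nonneg_right hx (norm_nonneg _)
    _ = ‖a‖ ^ 2 * ‖y‖ := by ring

/-- The right-hand side is the positive root of `t² + e t = n²`, written in rationalised form. -/
lemma le_two_mul_sq_div_of_mul_add_le {δ e n : ℝ} (hδ : 0 < δ) (he : 0 ≤ e)
    (h : δ * (δ + e) ≤ n ^ 2) :
    δ ≤ 2 * n ^ 2 / (e + Real.sqrt (e ^ 2 + 4 * n ^ 2)) := by
  have hn : 0 < n ^ 2 := lt_of_lt_of_le (by positivity) h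
  set s := Real.sqrt (e ^ 2 + 4 * n ^ 2) with hs
  have hs2 : s ^ 2 = e ^ 2 + 4 * n ^ 2 := Real.sq_sqrt (by positivity)
  have hspos : 0 < s := Real.sqrt_pos.mpr (by positivity)
  have hle : 2 * δ + e ≤ s := Real.le_sqrt_of_sq_le (by nlinarith)
  rw [le_div_iff₀ (by positivity)]
  nlinarith

/-- **Li–Li upper bound.** With `A = [[c, a*], [a, M]]`, `λ₁ = λ_max(M)` and
`η₁ = |c − λ₁|`, one has
`λ_max(A) − max (c, λ₁) ≤ 2‖a‖₂² / (η₁ + √(η₁² + 4‖a‖₂²))`. -/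
theorem bordered_lambdaMax_upper_LiLi
    (d : ℕ) (hd : 0 < d)
    (M : Matrix (Fin d) (Fin d) ℂ) (hM : M.IsHermitian)
    (c : ℝ) (a : EuclideanSpace ℂ (Fin d))
    (A : Matrix (Unit ⊕ Fin d) (Unit ⊕ Fin d) ℂ)
    (hA : A = Matrix.fromBlocks (Matrix.of fun _ _ => (c : ℂ))
        (Matrix.of fun _ j => star (a j)) (Matrix.of fun i _ => a i) M)
    (hAh : A.IsHermitian)
    (lam1 : ℝ) (hlam1 : lam1 = ⨆ i, hM.eigenvalues i)
    (eta1 : ℝ) (heta1 : eta1 = |c - lam1|) :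
    (⨆ i, hAh.eigenvalues i) - max c lam1
      ≤ 2 * ‖a‖ ^ 2 / (eta1 + Real.sqrt (eta1 ^ 2 + 4 * ‖a‖ ^ 2)) := by
  have he : 0 ≤ eta1 := heta1 ▸ abs_nonneg _
  have hl : ∀ i, hM.eigenvalues i ≤ lam1 := fun i =>
    hlam1 ▸ le_ciSup (Set.finite_range _).bddAbove i
  rw [sub_le_iff_le_add]
  refine ciSup_le fun k => ?_
  rw [← sub_le_iff_le_add]
  have hev := hAh.mulVec_eigenvectorBasis k
  have hv0 : hAh.eigenvectorBasis k ≠ 0 := hAh.eigenvectorBasis.orthonormal.ne_zero k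
  generalize hAh.eigenvalues k = μ at hev ⊢
  generalize hAh.eigenvectorBasis k = v at hev hv0
  rcases le_or_gt (μ - max c lam1) 0 with h0 | h0
  · exact h0.trans (by positivity)
  have hμc : c < μ := by linarith [le_max_left c lam1]
  have hμl : lam1 < μ := by linarith [le_max_right c lam1]
  have key : (μ - c) * (μ - lam1) ≤ ‖a‖ ^ 2 := by
    refine bordered_eigenvalue_mul_le hM hl hμl hμc a
      (WithLp.toLp 2 fun j => v (Sum.inr j)) (v (Sum.inl ())) ?_ ?_ ?_
    · by_contra! hcon
      obtain ⟨hx, hy⟩ := hcon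
      apply hv0
      ext i
      rcases i with ⟨⟩ | j
      · exact hx
      · exact congrArg (fun u : EuclideanSpace ℂ (Fin d) => u j) hy
    · have h := congrFun hev (Sum.inl ())
      simp only [hA, Matrix.mulVec, dotProduct, Fintype.sum_sum_type] at h
      simpa [PiLp.inner_apply, mul_comm] using h
    · ext j
      have h := congrFun hev (Sum.inr j)
      simp only [hA, Matrix.mulVec, dotProduct, Fintype.sum_sum_type] at h
      simpa [Matrix.toLpLin_apply, Matrix.mulVec, dotProduct, mul_comm, add_comm] using h
  refine le_two_mul_sq_div_of_mul_add_le h0 he (le_of_eq_of_le ?_ key)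
  rcases le_total c lam1 with hc | hc
  · rw [heta1, max_eq_right hc, abs_of_nonpos (by linarith)]
    ring
  · rw [heta1, max_eq_left hc, abs_of_nonneg (by linarith)]
    ring
end

section
/- Let d be a positive integer, M ∈ ℂ^{d×d} an Hermitian matrix with largest eigenvalue λ₁, c ∈ ℝ with c ≠ λ₁, and a ∈ ℂ^d. Let A be the (d+1)×(d+1) Hermitian bordered matrix A = [[c, a*], [a, M]]. Then λ_max(A) ≤ max(c, λ₁) + ‖a‖₂² / |λ₁ − c|. -/
/-!
Let `μ` be an eigenvalue of `A` with eigenvector `(x, v)`, so that `c x + a* v = μ x` and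
`x a + M v = μ v`. Only `μ > max c λ₁` needs an argument. The first row and Cauchy–Schwarz give
`(μ - c) |x| ≤ ‖a‖ ‖v‖`; pairing the remaining rows with `v` and using the Rayleigh bound
`v* M v ≤ λ₁ ‖v‖²` gives `(μ - λ₁) ‖v‖ ≤ |x| ‖a‖`. Hence `v ≠ 0` and
`(μ - λ₁) (μ - c) ≤ ‖a‖²`. The larger of the two factors on the left is at least `|λ₁ - c|`, and
the smaller one is `μ - max c λ₁`, which is the claim.
-/

open scoped MatrixOrder ComplexOrder in
theorem rayleigh_le {d : ℕ} {M : Matrix (Fin d) (Fin d) ℂ} (hM : M.IsHermitian) {r : ℝ}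
    (h : ∀ i, hM.eigenvalues i ≤ r) (v : EuclideanSpace ℂ (Fin d)) :
    (inner ℂ v (WithLp.toLp 2 (M.mulVec v.ofLp))).re ≤ r * ‖v‖ ^ 2 := by
  have h1 : M ≤ algebraMap ℝ _ r := by
    apply le_algebraMap_of_spectrum_le _ hM.isSelfAdjoint
    intro x hx
    rw [hM.spectrum_real_eq_range_eigenvalues] at hx
    obtain ⟨i, rfl⟩ := hx
    exact h i
  have h2 := (Matrix.le_iff.mp h1).dotProduct_mulVec_nonneg v.ofLp
  have h3 : star v.ofLp ⬝ᵥ ((algebraMap ℝ (Matrix (Fin d) (Fin d) ℂ) r - M).mulVec v.ofLp)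
      = (r : ℂ) * inner ℂ v v - inner ℂ v (WithLp.toLp 2 (M.mulVec v.ofLp)) := by
    rw [Matrix.sub_mulVec, dotProduct_sub, Algebra.algebraMap_eq_smul_one, Matrix.smul_mulVec,
      Matrix.one_mulVec, dotProduct_smul, EuclideanSpace.inner_eq_star_dotProduct,
      EuclideanSpace.inner_eq_star_dotProduct, dotProduct_comm, dotProduct_comm (star v.ofLp)]
    simp
  rw [h3, inner_self_eq_norm_sq_to_K] at h2
  have h4 := (Complex.le_def.mp h2).1
  have h5 : ((r : ℂ) * ((‖v‖ : ℝ) : ℂ) ^ 2).re = r * ‖v‖ ^ 2 := by norm_cast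
  simp only [Complex.zero_re, Complex.sub_re] at h4
  erw [h5] at h4
  linarith

/-- The secular inequality `(μ - r) (μ - c) ≤ ‖a‖²` for an eigenvalue `μ > c` of the
bordered matrix, for any upper bound `r` of the spectrum of `M`;
`x` and `v` are the two blocks of a nonzero eigenvector. -/
theorem secular_le {d : ℕ} {M : Matrix (Fin d) (Fin d) ℂ} (hM : M.IsHermitian) {r c μ : ℝ}
    (h : ∀ i, hM.eigenvalues i ≤ r) (a v : EuclideanSpace ℂ (Fin d)) (x : ℂ)
    (hne : x ≠ 0 ∨ v ≠ 0) (hcμ : c < μ)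
    (e1 : (c : ℂ) * x + inner ℂ a v = μ * x)
    (e2 : x • a + WithLp.toLp 2 (M.mulVec v.ofLp) = (μ : ℂ) • v) :
    (μ - r) * (μ - c) ≤ ‖a‖ ^ 2 := by
  have b1 : (μ - c) * ‖x‖ ≤ ‖a‖ * ‖v‖ := by
    have : inner ℂ a v = ((μ - c : ℝ) : ℂ) * x := by push_cast; linear_combination e1
    have h' := norm_inner_le_norm (𝕜 := ℂ) a v
    rwa [this, norm_mul, Complex.norm_real, Real.norm_of_nonneg (by linarith)] at h'
  have hv : 0 < ‖v‖ := by
    rw [norm_pos_iff]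
    rintro rfl
    have hx : 0 < ‖x‖ := norm_pos_iff.mpr (hne.resolve_right (by simp))
    rw [norm_zero, mul_zero] at b1
    nlinarith [mul_pos (sub_pos.mpr hcμ) hx]
  have b2 : (μ - r) * ‖v‖ ≤ ‖x‖ * ‖a‖ := by
    have e3 := congrArg (fun w => (inner ℂ v w).re) e2
    simp only [inner_add_right, inner_smul_right, Complex.add_re] at e3
    have h5 : ((μ : ℂ) * inner ℂ v v).re = μ * ‖v‖ ^ 2 := by
      rw [inner_self_eq_norm_sq_to_K]
      change ((μ : ℂ) * ((‖v‖ : ℝ) : ℂ) ^ 2).re = _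
      norm_cast
    have h6 := rayleigh_le hM h v
    have h7 : (x * inner ℂ v a).re ≤ ‖x‖ * (‖v‖ * ‖a‖) := by
      refine (Complex.re_le_norm _).trans ?_
      rw [norm_mul]
      gcongr
      exact norm_inner_le_norm v a
    rw [h5] at e3
    refine le_of_mul_le_mul_right ?_ hv
    nlinarith
  refine le_of_mul_le_mul_right ?_ hv
  calc (μ - r) * (μ - c) * ‖v‖ = (μ - c) * ((μ - r) * ‖v‖) := by ring
    _ ≤ (μ - c) * (‖x‖ * ‖a‖) := by gcongr
    _ = ((μ - c) * ‖x‖) * ‖a‖ := by ring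
    _ ≤ (‖a‖ * ‖v‖) * ‖a‖ := by gcongr
    _ = ‖a‖ ^ 2 * ‖v‖ := by ring

/-- **Mathias-type bound.** With `A = [[c, a*], [a, M]]`, `λ₁ = λ_max(M)` and `c ≠ λ₁`:
`λ_max(A) ≤ max (c, λ₁) + ‖a‖₂² / |λ₁ − c|`. -/
theorem bordered_lambdaMax_le_mathias
    (d : ℕ) (hd : 0 < d)
    (M : Matrix (Fin d) (Fin d) ℂ) (hM : M.IsHermitian)
    (c : ℝ) (a : EuclideanSpace ℂ (Fin d))
    (lam1 : ℝ) (hlam1 : lam1 = ⨆ i, hM.eigenvalues i)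
    (hc : c ≠ lam1)
    (A : Matrix (Unit ⊕ Fin d) (Unit ⊕ Fin d) ℂ)
    (hA : A = Matrix.fromBlocks (Matrix.of fun _ _ => (c : ℂ))
        (Matrix.of fun _ j => star (a j)) (Matrix.of fun i _ => a i) M)
    (hAh : A.IsHermitian) :
    (⨆ i, hAh.eigenvalues i) ≤ max c lam1 + ‖a‖ ^ 2 / |lam1 - c| := by
  refine ciSup_le fun i => ?_
  have hpos : 0 < |lam1 - c| := abs_pos.mpr (sub_ne_zero.mpr hc.symm)
  have hq : 0 ≤ ‖a‖ ^ 2 / |lam1 - c| := by positivity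
  have hle : ∀ j, hM.eigenvalues j ≤ lam1 := fun j => by
    rw [hlam1]
    exact le_ciSup (Set.finite_range _).bddAbove j
  have hev := hAh.mulVec_eigenvectorBasis i
  have hw := hAh.eigenvectorBasis.orthonormal.ne_zero i
  generalize hAh.eigenvectorBasis i = w at hev hw
  generalize hAh.eigenvalues i = μ at hev ⊢
  by_cases hμ : μ ≤ max c lam1
  · linarith
  obtain ⟨h1, h2⟩ := max_lt_iff.mp (not_le.mp hμ)
  have key : (μ - lam1) * (μ - c) ≤ ‖a‖ ^ 2 := by
    refine secular_le hM hle a (WithLp.toLp 2 fun j => w (Sum.inr j)) (w (Sum.inl ()))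
      ?_ h1 ?_ ?_
    · by_contra! hcon
      apply hw
      ext k
      rcases k with u | j
      · exact hcon.1
      · simpa using congrArg (fun z : EuclideanSpace ℂ (Fin d) => z j) hcon.2
    · have := congrFun hev (Sum.inl ())
      simpa [hA, Matrix.mulVec, dotProduct, PiLp.inner_apply, mul_comm] using this
    · ext j
      have := congrFun hev (Sum.inr j)
      simpa [hA, Matrix.mulVec, dotProduct, mul_comm] using this
  rw [← sub_le_iff_le_add', le_div_iff₀ hpos]
  rcases le_total c lam1 with h | h
  · rw [max_eq_right h, abs_of_nonneg (by linarith)]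
    nlinarith
  · rw [max_eq_left h, abs_of_nonpos (by linarith)]
    nlinarith
end

section
/- Let d be a positive integer, M ∈ ℂ^{d×d} a positive semi-definite Hermitian matrix of rank r ≤ d with eigenvalues λ₁ ≥ … ≥ λ_d, c ∈ ℝ, and a ∈ ℂ^d. Let A be the (d+1)×(d+1) Hermitian bordered matrix A = [[c, a*], [a, M]] and set η_r = |c − λ_r|. Then the (r+1)-st largest eigenvalue of A satisfies λ_{r+1}(A) ≥ min(c, λ_r) − 2‖a‖₂² / (η_r + √(η_r² + 4‖a‖₂²)). -/
/-!
The bound is Courant–Fischer combined with a `2 × 2` eigenvalue computation. Let `t` be the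
right-hand side; it is the smaller eigenvalue of `[[c, ‖a‖], [‖a‖, λ_r]]`, so the quadratic form
`(c - t) p² - 2 ‖a‖ p q + (λ_r - t) q²` is nonnegative (`border_form_nonneg`).

On vectors `x = (x₀, y)` with `y` orthogonal to the eigenvectors of `M` of index `> r`, one has
`⟪y, M y⟫ ≥ λ_r ‖y‖²`, and Cauchy–Schwarz on the border term gives `⟪x, A x⟫ ≥ t ‖x‖²`. On vectors
orthogonal to the first `r` eigenvectors of `A` one has `⟪x, A x⟫ ≤ λ_{r+1}(A) ‖x‖²`. These are
`(d - r) + r = d` linear conditions on a space of dimension `d + 1`, so some nonzero `x` satisfies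
all of them, and comparing the two estimates at `x` gives `t ≤ λ_{r+1}(A)`.
-/

open scoped ComplexOrder
open scoped InnerProductSpace

/-- The quadratic form of a Hermitian matrix in its eigenvector coordinates. -/
lemma re_inner_toEuclideanLin_eq_sum {n : Type*} [Fintype n] [DecidableEq n]
    {B : Matrix n n ℂ} (hB : B.IsHermitian) (x : EuclideanSpace ℂ n) :
    (⟪x, Matrix.toEuclideanLin B x⟫_ℂ).re
      = ∑ i, hB.eigenvalues i * ‖⟪hB.eigenvectorBasis i, x⟫_ℂ‖ ^ 2 := by
  have hsymm := Matrix.isSymmetric_toEuclideanLin_iff.mpr hB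
  have hv : ∀ i, ⟪hB.eigenvectorBasis i, Matrix.toEuclideanLin B x⟫_ℂ
      = hB.eigenvalues i * ⟪hB.eigenvectorBasis i, x⟫_ℂ := by
    intro i
    have hBv : Matrix.toEuclideanLin B (hB.eigenvectorBasis i)
        = (hB.eigenvalues i : ℂ) • hB.eigenvectorBasis i := by
      ext j
      have := congrFun (hB.mulVec_eigenvectorBasis i) j
      simpa [Matrix.toLpLin_apply] using this
    rw [← hsymm, hBv, inner_smul_left, Complex.conj_ofReal]
  rw [← hB.eigenvectorBasis.sum_inner_mul_inner x, Complex.re_sum]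
  refine Finset.sum_congr rfl fun i _ => ?_
  rw [hv, mul_left_comm, Complex.re_ofReal_mul, ← inner_conj_symm x, Complex.conj_mul']
  norm_cast

/-- Estimate of the form on the span of the eigenvectors whose eigenvalue is at least `l`. -/
lemma le_re_inner_of_forall {n : Type*} [Fintype n] [DecidableEq n]
    {B : Matrix n n ℂ} (hB : B.IsHermitian) (x : EuclideanSpace ℂ n) (l : ℝ)
    (h : ∀ i, l ≤ hB.eigenvalues i ∨ ⟪hB.eigenvectorBasis i, x⟫_ℂ = 0) :
    l * ‖x‖ ^ 2 ≤ (⟪x, Matrix.toEuclideanLin B x⟫_ℂ).re := by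
  rw [re_inner_toEuclideanLin_eq_sum hB, ← hB.eigenvectorBasis.sum_sq_norm_inner_right x,
    Finset.mul_sum]
  refine Finset.sum_le_sum fun i _ => ?_
  rcases h i with h | h
  · gcongr
  · simp [h]

/-- Estimate of the form on the span of the eigenvectors whose eigenvalue is at most `l`. -/
lemma re_inner_le_of_forall {n : Type*} [Fintype n] [DecidableEq n]
    {B : Matrix n n ℂ} (hB : B.IsHermitian) (x : EuclideanSpace ℂ n) (l : ℝ)
    (h : ∀ i, hB.eigenvalues i ≤ l ∨ ⟪hB.eigenvectorBasis i, x⟫_ℂ = 0) :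
    (⟪x, Matrix.toEuclideanLin B x⟫_ℂ).re ≤ l * ‖x‖ ^ 2 := by
  rw [re_inner_toEuclideanLin_eq_sum hB, ← hB.eigenvectorBasis.sum_sq_norm_inner_right x,
    Finset.mul_sum]
  refine Finset.sum_le_sum fun i _ => ?_
  rcases h i with h | h
  · gcongr
  · simp [h]

/-- The stated bound is a lower bound for the eigenvalues of `[[c, -s], [-s, l]]`. -/
lemma border_form_nonneg (c l s p q : ℝ) :
    (min c l - 2 * s ^ 2 / (|c - l| + Real.sqrt (|c - l| ^ 2 + 4 * s ^ 2))) * (p ^ 2 + q ^ 2)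
      ≤ c * p ^ 2 - 2 * s * p * q + l * q ^ 2 := by
  set η := |c - l| with hη
  set R := Real.sqrt (η ^ 2 + 4 * s ^ 2) with hR
  have hη0 : 0 ≤ η := abs_nonneg _
  have hR0 : 0 ≤ R := Real.sqrt_nonneg _
  have hR2 : R ^ 2 = η ^ 2 + 4 * s ^ 2 := Real.sq_sqrt (by positivity)
  -- Rationalising; when the denominator vanishes, so do `η`, `R`, and both sides.
  have hδ : 2 * s ^ 2 / (η + R) = (R - η) / 2 := by
    rcases eq_or_lt_of_le (add_nonneg hη0 hR0) with h | h
    · rw [← h, div_zero]; linarith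
    · field_simp; linarith
  rw [hδ]
  have hRη : η ≤ R := by
    apply Real.le_sqrt_of_sq_le; nlinarith [sq_nonneg s]
  -- The two diagonal gaps `c - t` and `l - t` have product `s ^ 2`.
  have key : ∀ u v p q : ℝ, 0 ≤ u → 0 ≤ v → u * v = s ^ 2 →
      0 ≤ u * p ^ 2 - 2 * s * p * q + v * q ^ 2 := by
    intro u v p q hu hv huv
    rcases eq_or_lt_of_le hu with h | h
    · have : s = 0 := by rw [← h, zero_mul] at huv; exact pow_eq_zero_iff two_ne_zero |>.mp huv.symm
      rw [← h, this]; nlinarith [mul_nonneg hv (sq_nonneg q)]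
    · have : 0 ≤ u * (u * p ^ 2 - 2 * s * p * q + v * q ^ 2) := by
        nlinarith [sq_nonneg (u * p - s * q)]
      exact nonneg_of_mul_nonneg_right this h
  rcases le_total c l with h | h
  · have he : η = l - c := by rw [hη, abs_of_nonpos (by linarith)]; ring
    rw [min_eq_left h]
    have := key ((R - η) / 2) ((R + η) / 2) p q (by linarith) (by linarith) (by nlinarith)
    have hl : l = c + η := by linarith
    rw [hl]; linarith
  · have he : η = c - l := by rw [hη, abs_of_nonneg (by linarith)]
    rw [min_eq_right h]
    have := key ((R + η) / 2) ((R - η) / 2) p q (by linarith) (by linarith) (by nlinarith)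
    have hc : c = l + η := by linarith
    rw [hc]; linarith

/-- The lower part `y` of a vector `(x₀, y)`. -/
noncomputable def lowerPart (d : ℕ) :
    EuclideanSpace ℂ (Unit ⊕ Fin d) →ₗ[ℂ] EuclideanSpace ℂ (Fin d) where
  toFun x := WithLp.toLp 2 fun i => x (Sum.inr i)
  map_add' _ _ := rfl
  map_smul' _ _ := rfl

lemma norm_sq_eq_lowerPart {d : ℕ} (x : EuclideanSpace ℂ (Unit ⊕ Fin d)) :
    ‖x‖ ^ 2 = ‖x (Sum.inl ())‖ ^ 2 + ‖lowerPart d x‖ ^ 2 := by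
  simp only [EuclideanSpace.norm_sq_eq, Fintype.sum_sum_type, Finset.univ_unique,
    Finset.sum_singleton]
  rfl

lemma re_inner_bordered {d : ℕ} (M : Matrix (Fin d) (Fin d) ℂ) (c : ℝ)
    (a : EuclideanSpace ℂ (Fin d)) (x : EuclideanSpace ℂ (Unit ⊕ Fin d)) :
    (⟪x, Matrix.toEuclideanLin (Matrix.fromBlocks (Matrix.of fun _ _ => (c : ℂ))
        (Matrix.of fun _ j => star (a j)) (Matrix.of fun i _ => a i) M) x⟫_ℂ).re
      = c * ‖x (Sum.inl ())‖ ^ 2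
        + 2 * (star (x (Sum.inl ())) * ⟪a, lowerPart d x⟫_ℂ).re
        + (⟪lowerPart d x, Matrix.toEuclideanLin M (lowerPart d x)⟫_ℂ).re := by
  set x₀ := x (Sum.inl ()) with hx₀
  set y := lowerPart d x with hy
  have hyi : ∀ i, x (Sum.inr i) = y i := fun i => rfl
  have h1 : ⟪x, Matrix.toEuclideanLin (Matrix.fromBlocks (Matrix.of fun _ _ => (c : ℂ))
        (Matrix.of fun _ j => star (a j)) (Matrix.of fun i _ => a i) M) x⟫_ℂ
      = c * (x₀ * star x₀) + star x₀ * ⟪a, y⟫_ℂ + x₀ * ⟪y, a⟫_ℂ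
        + ⟪y, Matrix.toEuclideanLin M y⟫_ℂ := by
    simp only [PiLp.inner_apply, RCLike.inner_apply, Matrix.toLpLin_apply, Matrix.mulVec,
      dotProduct, Fintype.sum_sum_type, Finset.univ_unique, Finset.sum_singleton,
      Matrix.fromBlocks_apply₁₁, Matrix.fromBlocks_apply₁₂, Matrix.fromBlocks_apply₂₁,
      Matrix.fromBlocks_apply₂₂, Matrix.of_apply, hyi, add_mul, Finset.sum_add_distrib,
      Finset.mul_sum, Finset.sum_mul, PUnit.default_eq_unit, ← hx₀, starRingEnd_apply]
    have e1 : ∀ i, star (a i) * y i * star x₀ = star x₀ * (y i * star (a i)) := fun i => by ring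
    have e2 : ∀ i, a i * x₀ * star (y i) = x₀ * (a i * star (y i)) := fun i => by ring
    simp only [e1, e2]
    ring
  have h2 : (x₀ * ⟪y, a⟫_ℂ).re = (star x₀ * ⟪a, y⟫_ℂ).re := by
    rw [← inner_conj_symm y a, ← Complex.conj_re]
    simp
  have h3 : x₀ * star x₀ = ((‖x₀‖ ^ 2 : ℝ) : ℂ) := by
    simpa using Complex.mul_conj' x₀
  rw [h1, Complex.add_re, Complex.add_re, Complex.add_re, h2, h3, Complex.re_ofReal_mul,
    Complex.ofReal_re]
  ring

/-- **Lower bound on the smallest nonzero eigenvalue after bordering.**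
`M ∈ ℂ^{d×d}` is PSD Hermitian of rank `r ≤ d`, with eigenvalues `μ 0 ≥ … ≥ μ (d-1)`
(`μ` is an antitone enumeration of the eigenvalues of `M`, so `μ (r-1) = λ_r`),
and `ν` is an antitone enumeration of the eigenvalues of `A = [[c, a*], [a, M]]`
(so `ν r = λ_{r+1}(A)`). With `η_r = |c − λ_r|`:
`λ_{r+1}(A) ≥ min (c, λ_r) − 2‖a‖₂²/(η_r + √(η_r² + 4‖a‖₂²))`. -/
theorem bordered_smallest_nonzero_eigenvalue_lower_LiLi
    (d : ℕ) (hd : 0 < d)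
    (M : Matrix (Fin d) (Fin d) ℂ) (hM : M.IsHermitian) (hpsd : M.PosSemidef)
    (r : ℕ) (hr1 : 1 ≤ r) (hrd : r ≤ d) (hrank : M.rank = r)
    (c : ℝ) (a : EuclideanSpace ℂ (Fin d))
    (μ : Fin d → ℝ) (hμa : Antitone μ)
    (hμ : ∃ e : Equiv.Perm (Fin d), ∀ i, μ i = hM.eigenvalues (e i))
    (A : Matrix (Unit ⊕ Fin d) (Unit ⊕ Fin d) ℂ)
    (hA : A = Matrix.fromBlocks (Matrix.of fun _ _ => (c : ℂ))
        (Matrix.of fun _ j => star (a j)) (Matrix.of fun i _ => a i) M)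
    (hAh : A.IsHermitian)
    (ν : Fin (d + 1) → ℝ) (hνa : Antitone ν)
    (hν : ∃ e : Fin (d + 1) ≃ (Unit ⊕ Fin d), ∀ i, ν i = hAh.eigenvalues (e i))
    (lamr : ℝ) (hlamr : lamr = μ ⟨r - 1, by omega⟩)
    (etar : ℝ) (hetar : etar = |c - lamr|) :
    ν ⟨r, by omega⟩
      ≥ min c lamr - 2 * ‖a‖ ^ 2 / (etar + Real.sqrt (etar ^ 2 + 4 * ‖a‖ ^ 2)) := by
  obtain ⟨e, he⟩ := hμ
  obtain ⟨f, hf⟩ := hν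
  -- The `d` linear conditions: for `i < r` against eigenvectors of `A`, otherwise of `M`.
  let L : EuclideanSpace ℂ (Unit ⊕ Fin d) →ₗ[ℂ] (Fin d → ℂ) := LinearMap.pi fun i =>
    if (i : ℕ) < r then (innerₛₗ ℂ (hAh.eigenvectorBasis (f i.castSucc)))
    else (innerₛₗ ℂ (hM.eigenvectorBasis (e i))) ∘ₗ lowerPart d
  have hker : LinearMap.ker L ≠ ⊥ := LinearMap.ker_ne_bot_of_finrank_lt (by simp)
  obtain ⟨x, hxL, hx0⟩ := Submodule.exists_mem_ne_zero_of_ne_bot hker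
  have hLi : ∀ i, L x i = 0 := fun i => congrFun (LinearMap.mem_ker.mp hxL) i
  have hup := re_inner_le_of_forall hAh x (ν ⟨r, by omega⟩) (by
    intro k
    obtain ⟨i, rfl⟩ := f.surjective k
    rw [← hf]
    by_cases hi : (i : ℕ) < r
    · right
      have := hLi ⟨i, by omega⟩
      simpa [L, hi] using this
    · left
      exact hνa (Fin.mk_le_of_le_val (not_lt.mp hi)))
  have hlow := le_re_inner_of_forall hM (lowerPart d x) lamr (by
    intro k
    obtain ⟨i, rfl⟩ := e.surjective k
    rw [← he, hlamr]
    by_cases hi : (i : ℕ) < r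
    · left
      exact hμa (Fin.le_def.mpr (by simp only; omega))
    · right
      have := hLi i
      simpa [L, hi] using this)
  have hexp := re_inner_bordered M c a x
  rw [← hA] at hexp
  have hcs : -(‖a‖ * ‖x (Sum.inl ())‖ * ‖lowerPart d x‖)
      ≤ (star (x (Sum.inl ())) * ⟪a, lowerPart d x⟫_ℂ).re := by
    have h1 := (abs_le.mp (Complex.abs_re_le_norm
      (star (x (Sum.inl ())) * ⟪a, lowerPart d x⟫_ℂ))).1
    rw [norm_mul, norm_star] at h1
    have h2 := mul_le_mul_of_nonneg_left (norm_inner_le_norm (𝕜 := ℂ) a (lowerPart d x))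
      (norm_nonneg (x (Sum.inl ())))
    linarith
  have hform := border_form_nonneg c lamr ‖a‖ ‖x (Sum.inl ())‖ ‖lowerPart d x‖
  rw [← hetar, ← norm_sq_eq_lowerPart] at hform
  have hpos : 0 < ‖x‖ ^ 2 := by positivity
  refine le_of_mul_le_mul_right (hform.trans ?_) hpos
  linarith
end

section
/- Let d be a positive integer, M ∈ ℂ^{d×d} a positive semi-definite Hermitian matrix of rank r ≤ d with eigenvalues λ₁ ≥ … ≥ λ_d, c ∈ ℝ with c ≠ λ_r, and a ∈ ℂ^d. Let A be the (d+1)×(d+1) Hermitian bordered matrix A = [[c, a*], [a, M]]. Then λ_{r+1}(A) ≥ min(c, λ_r) − ‖a‖₂² / |c − λ_r|. -/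
/-!
The proof combines the Courant–Fischer dimension count with an estimate for a `2 × 2` matrix.

Write `λ = λ_r(M)` and consider vectors `x = (t, w)` with `w` in the span of eigenvectors of `M`
for its `r` largest eigenvalues. By Cauchy–Schwarz, the quadratic form of `A` at such an `x` is at
least `c |t|² - 2 ‖a‖ |t| ‖w‖ + λ ‖w‖²`, and this real binary form is bounded below by
`β (|t|² + ‖w‖²)` with `β = min c λ - ‖a‖² / |c - λ|` (`two_by_two_lower`).

These vectors form a space of dimension `r + 1`, so one of them, nonzero, is orthogonal to the
eigenvectors of the `r` largest eigenvalues of `A`: it solves `d` linear equations in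
`d + 1` unknowns. At that vector the quadratic form is at most `λ_{r+1}(A) ‖x‖²`
(`quadForm_le`), which yields the bound.
-/

open scoped ComplexOrder

/-- The quadratic form `x ↦ Re ⟨x, B x⟩` of a complex matrix on Euclidean space. -/
noncomputable def quadForm {n : Type*} [Fintype n] [DecidableEq n] (B : Matrix n n ℂ)
    (x : EuclideanSpace ℂ n) : ℝ :=
  (inner ℂ x (Matrix.toEuclideanLin B x)).re

lemma quadForm_eq_sum {n : Type*} [Fintype n] [DecidableEq n] {B : Matrix n n ℂ}
    (hB : B.IsHermitian) (x : EuclideanSpace ℂ n) :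
    quadForm B x = ∑ i, hB.eigenvalues i * ‖inner ℂ (hB.eigenvectorBasis i) x‖ ^ 2 := by
  have hsymm := Matrix.isSymmetric_toEuclideanLin_iff.mpr hB
  have key : ∀ i, inner ℂ (hB.eigenvectorBasis i) (Matrix.toEuclideanLin B x)
      = (hB.eigenvalues i : ℂ) * inner ℂ (hB.eigenvectorBasis i) x := by
    intro i
    have h1 : Matrix.toEuclideanLin B (hB.eigenvectorBasis i)
        = (hB.eigenvalues i : ℂ) • hB.eigenvectorBasis i := by
      ext j
      have := congrFun (hB.mulVec_eigenvectorBasis i) j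
      simpa [Matrix.toLpLin_apply] using this
    rw [← hsymm, h1, inner_smul_left, Complex.conj_ofReal]
  rw [quadForm, ← hB.eigenvectorBasis.sum_inner_mul_inner, Complex.re_sum]
  refine Finset.sum_congr rfl fun i _ => ?_
  rw [key, ← inner_conj_symm x, mul_left_comm, Complex.conj_mul']
  norm_cast

lemma quadForm_le {n : Type*} [Fintype n] [DecidableEq n] {B : Matrix n n ℂ}
    (hB : B.IsHermitian) (x : EuclideanSpace ℂ n) (s : ℝ)
    (h : ∀ i, inner ℂ (hB.eigenvectorBasis i) x = 0 ∨ hB.eigenvalues i ≤ s) :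
    quadForm B x ≤ s * ‖x‖ ^ 2 := by
  rw [quadForm_eq_sum hB, ← hB.eigenvectorBasis.sum_sq_norm_inner_right, Finset.mul_sum]
  refine Finset.sum_le_sum fun i _ => ?_
  rcases h i with h | h
  · simp [h]
  · gcongr

lemma le_quadForm {n : Type*} [Fintype n] [DecidableEq n] {B : Matrix n n ℂ}
    (hB : B.IsHermitian) (x : EuclideanSpace ℂ n) (s : ℝ)
    (h : ∀ i, inner ℂ (hB.eigenvectorBasis i) x = 0 ∨ s ≤ hB.eigenvalues i) :
    s * ‖x‖ ^ 2 ≤ quadForm B x := by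
  rw [quadForm_eq_sum hB, ← hB.eigenvectorBasis.sum_sq_norm_inner_right, Finset.mul_sum]
  refine Finset.sum_le_sum fun i _ => ?_
  rcases h i with h | h
  · simp [h]
  · gcongr

/-- With `β = min c l - α² / |c - l|`, the real matrix `[[c, -α], [-α, l]]` is at least `β`:
both `c - β` and `l - β` are nonnegative and their product is at least `α²`. -/
lemma two_by_two_lower (c l α p q : ℝ) (hcl : c ≠ l) :
    (min c l - α ^ 2 / |c - l|) * (p ^ 2 + q ^ 2)
      ≤ c * p ^ 2 - 2 * α * p * q + l * q ^ 2 := by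
  -- In the ordered case, with gap `g = l - c`, the difference of the two sides is
  -- `(α p - g q)² / g + α² q² / g`.
  have main : ∀ c l p q : ℝ, c < l →
      (c - α ^ 2 / (l - c)) * (p ^ 2 + q ^ 2) ≤ c * p ^ 2 - 2 * α * p * q + l * q ^ 2 := by
    intro c l p q h
    have hg : 0 < l - c := sub_pos.mpr h
    have e : c * p ^ 2 - 2 * α * p * q + l * q ^ 2 - (c - α ^ 2 / (l - c)) * (p ^ 2 + q ^ 2)
        = (α * p - (l - c) * q) ^ 2 / (l - c) + α ^ 2 * q ^ 2 / (l - c) := by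
      field_simp
      ring
    have : 0 ≤ (α * p - (l - c) * q) ^ 2 / (l - c) + α ^ 2 * q ^ 2 / (l - c) := by positivity
    linarith
  rcases lt_or_gt_of_ne hcl with h | h
  · rw [min_eq_left h.le, abs_sub_comm, abs_of_pos (sub_pos.mpr h)]
    exact main c l p q h
  · rw [min_eq_right h.le, abs_of_pos (sub_pos.mpr h)]
    linarith [main l c q p h]

/-- The lower block of a bordered vector, as a linear map. -/
noncomputable def lowerBlock (d : ℕ) :
    EuclideanSpace ℂ (Unit ⊕ Fin d) →ₗ[ℂ] EuclideanSpace ℂ (Fin d) where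
  toFun x := WithLp.toLp 2 fun i => x (Sum.inr i)
  map_add' _ _ := rfl
  map_smul' _ _ := rfl

lemma norm_sq_bordered {d : ℕ} (x : EuclideanSpace ℂ (Unit ⊕ Fin d)) :
    ‖x‖ ^ 2 = ‖x (Sum.inl ())‖ ^ 2 + ‖lowerBlock d x‖ ^ 2 := by
  simp only [EuclideanSpace.norm_sq_eq, Fintype.sum_sum_type, Finset.univ_unique,
    Finset.sum_singleton, PUnit.default_eq_unit]
  rfl

lemma quadForm_bordered {d : ℕ} (M : Matrix (Fin d) (Fin d) ℂ) (c : ℝ)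
    (a : EuclideanSpace ℂ (Fin d)) (x : EuclideanSpace ℂ (Unit ⊕ Fin d)) :
    quadForm (Matrix.fromBlocks (Matrix.of fun _ _ => (c : ℂ))
        (Matrix.of fun _ j => star (a j)) (Matrix.of fun i _ => a i) M) x
      = c * ‖x (Sum.inl ())‖ ^ 2
        + 2 * (star (x (Sum.inl ())) * inner ℂ a (lowerBlock d x)).re
        + quadForm M (lowerBlock d x) := by
  set t := x (Sum.inl ()) with ht
  set w := lowerBlock d x with hw
  have hwi : ∀ i, x (Sum.inr i) = w i := fun _ => rfl
  have h : inner ℂ x (Matrix.toEuclideanLin (Matrix.fromBlocks (Matrix.of fun _ _ => (c : ℂ))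
        (Matrix.of fun _ j => star (a j)) (Matrix.of fun i _ => a i) M) x)
      = star t * (c * t) + star t * inner ℂ a w + t * inner ℂ w a
        + inner ℂ w (Matrix.toEuclideanLin M w) := by
    simp only [PiLp.inner_apply, Fintype.sum_sum_type, Matrix.toLpLin_apply, Matrix.mulVec,
      dotProduct, Matrix.fromBlocks_apply₁₁, Matrix.fromBlocks_apply₁₂,
      Matrix.fromBlocks_apply₂₁, Matrix.fromBlocks_apply₂₂, Matrix.of_apply, RCLike.inner_apply,
      Finset.univ_unique, Finset.sum_singleton, PUnit.default_eq_unit, hwi, ← ht,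
      add_mul, Finset.sum_add_distrib, Finset.mul_sum]
    simp only [starRingEnd_apply, Finset.sum_mul]
    have : ∀ i, star t * (w i * star (a i)) = star (a i) * w i * star t := fun i => by ring
    simp only [this]
    have : ∀ i, t * (a i * star (w i)) = a i * t * star (w i) := fun i => by ring
    simp only [this]
    ring
  have h2 : (t * inner ℂ w a).re = (star t * inner ℂ a w).re := by
    rw [← inner_conj_symm w a, ← Complex.conj_re]
    simp
  have h3 : (star t * (c * t)).re = c * ‖t‖ ^ 2 := by
    rw [mul_left_comm, ← starRingEnd_apply, Complex.conj_mul']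
    norm_cast
  rw [quadForm, h, quadForm, Complex.add_re, Complex.add_re, Complex.add_re, h2, h3]
  ring

/-- **Mathias-type lower bound on the smallest nonzero eigenvalue after bordering.**
`M ∈ ℂ^{d×d}` is PSD Hermitian of rank `r ≤ d`, with antitone eigenvalue enumeration `μ`
(so `μ (r-1) = λ_r`), `c ≠ λ_r`, and `ν` antitone enumeration of eigenvalues of
`A = [[c, a*], [a, M]]` (so `ν r = λ_{r+1}(A)`). Then
`λ_{r+1}(A) ≥ min (c, λ_r) − ‖a‖₂² / |c − λ_r|`. -/
theorem bordered_smallest_nonzero_eigenvalue_lower_mathias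
    (d : ℕ) (hd : 0 < d)
    (M : Matrix (Fin d) (Fin d) ℂ) (hM : M.IsHermitian) (hpsd : M.PosSemidef)
    (r : ℕ) (hr1 : 1 ≤ r) (hrd : r ≤ d) (hrank : M.rank = r)
    (c : ℝ) (a : EuclideanSpace ℂ (Fin d))
    (μ : Fin d → ℝ) (hμa : Antitone μ)
    (hμ : ∃ e : Equiv.Perm (Fin d), ∀ i, μ i = hM.eigenvalues (e i))
    (hc : c ≠ μ ⟨r - 1, by omega⟩)
    (A : Matrix (Unit ⊕ Fin d) (Unit ⊕ Fin d) ℂ)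
    (hA : A = Matrix.fromBlocks (Matrix.of fun _ _ => (c : ℂ))
        (Matrix.of fun _ j => star (a j)) (Matrix.of fun i _ => a i) M)
    (hAh : A.IsHermitian)
    (ν : Fin (d + 1) → ℝ) (hνa : Antitone ν)
    (hν : ∃ e : Fin (d + 1) ≃ (Unit ⊕ Fin d), ∀ i, ν i = hAh.eigenvalues (e i)) :
    ν ⟨r, by omega⟩
      ≥ min c (μ ⟨r - 1, by omega⟩) - ‖a‖ ^ 2 / |c - μ ⟨r - 1, by omega⟩| := by
  obtain ⟨eM, heM⟩ := hμ
  obtain ⟨eA, heA⟩ := hν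
  -- The `d` equations: orthogonality to the top `r` eigenvectors of `A`, and orthogonality of the
  -- lower block to the last `d - r` eigenvectors of `M`.
  let L : EuclideanSpace ℂ (Unit ⊕ Fin d) →ₗ[ℂ] (Fin d → ℂ) := LinearMap.pi fun j =>
    if j.val < r then (innerSL ℂ (hAh.eigenvectorBasis (eA j.castSucc))).toLinearMap
    else (innerSL ℂ (hM.eigenvectorBasis (eM j))).toLinearMap ∘ₗ lowerBlock d
  obtain ⟨x, hxL, hx0⟩ : ∃ x, L x = 0 ∧ x ≠ 0 := by
    have hker : LinearMap.ker L ≠ ⊥ := LinearMap.ker_ne_bot_of_finrank_lt (by simp)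
    obtain ⟨x, hx, hx0⟩ := (Submodule.ne_bot_iff _).mp hker
    exact ⟨x, hx, hx0⟩
  have hxA : ∀ j : Fin d, j.val < r →
      inner ℂ (hAh.eigenvectorBasis (eA j.castSucc)) x = 0 := by
    intro j hj
    have := congrFun hxL j
    simpa [L, hj] using this
  have hxM : ∀ j : Fin d, ¬ j.val < r →
      inner ℂ (hM.eigenvectorBasis (eM j)) (lowerBlock d x) = 0 := by
    intro j hj
    have := congrFun hxL j
    simpa [L, hj] using this
  have hup : quadForm A x ≤ ν ⟨r, by omega⟩ * ‖x‖ ^ 2 := by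
    refine quadForm_le hAh x _ fun i => ?_
    obtain ⟨k, rfl⟩ := eA.surjective i
    rcases lt_or_ge k.val r with hk | hk
    · exact Or.inl (hxA ⟨k.val, by omega⟩ hk)
    · exact Or.inr (heA k ▸ hνa (Fin.mk_le_of_le_val hk))
  have hlowM : μ ⟨r - 1, by omega⟩ * ‖lowerBlock d x‖ ^ 2 ≤ quadForm M (lowerBlock d x) := by
    refine le_quadForm hM _ _ fun i => ?_
    obtain ⟨k, rfl⟩ := eM.surjective i
    by_cases hk : k.val < r
    · refine Or.inr (heM k ▸ hμa ?_)
      rw [Fin.le_def]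
      simp only
      omega
    · exact Or.inl (hxM k hk)
  have hcs : -(‖x (Sum.inl ())‖ * (‖a‖ * ‖lowerBlock d x‖))
      ≤ (star (x (Sum.inl ())) * inner ℂ a (lowerBlock d x)).re := by
    refine (abs_le.mp ((Complex.abs_re_le_norm _).trans ?_)).1
    rw [norm_mul, norm_star]
    gcongr
    exact norm_inner_le_norm _ _
  have h22 := two_by_two_lower c (μ ⟨r - 1, by omega⟩) ‖a‖ ‖x (Sum.inl ())‖ ‖lowerBlock d x‖ hc
  rw [← norm_sq_bordered] at h22
  rw [hA, quadForm_bordered] at hup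
  have hpos : 0 < ‖x‖ ^ 2 := by positivity
  refine le_of_mul_le_mul_right ?_ hpos
  nlinarith
end

section
/- Let d be a positive integer, M ∈ ℂ^{d×d} a nonzero Hermitian matrix, c ∈ ℝ, and a ∈ ℂ^d. Let A be the (d+1)×(d+1) Hermitian bordered matrix A = [[c, a*], [a, M]]. Then ‖A‖ ≤ ‖M‖ + |c|/2 + (‖a‖₂² + c²/8) / ‖M‖. -/
/-!
Writing `m = ‖M‖`, `α = ‖a‖`, `γ = |c|`, the Cauchy–Schwarz inequality and the definition of `‖M‖`
show that `‖A (u, v)‖` is at most the Euclidean norm of `B (|u|, ‖v‖)`, where `B = [[γ, α], [α, m]]`.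
So it suffices that `‖B‖ ≤ K` for `K = m + γ/2 + (α² + γ²/8)/m`. This holds because `K - B` and
`K + B` are positive semidefinite; the essential point is `(K - γ)(K - m) ≥ α²`, which is an
elementary computation (`bordered_det_bound`).
-/

/-- A `2 × 2` real symmetric matrix with positive corner and nonnegative determinant is positive
semidefinite. -/
lemma quadForm_nonneg {P Q b : ℝ} (hP : 0 < P) (h : b ^ 2 ≤ P * Q) (x y : ℝ) :
    0 ≤ P * x ^ 2 + 2 * b * x * y + Q * y ^ 2 := by
  have h1 : 0 ≤ P * (P * x ^ 2 + 2 * b * x * y + Q * y ^ 2) := by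
    nlinarith [sq_nonneg (P * x + b * y), mul_nonneg (sub_nonneg.2 h) (sq_nonneg y)]
  exact nonneg_of_mul_nonneg_right h1 hP

/-- For `B = [[γ, α], [α, m]]` the hypotheses make `K - B` and `K + B` positive semidefinite, whence
`‖B (p, q)‖² ≤ K² ‖(p, q)‖²`. -/
lemma sq_norm_two_le {γ α m K : ℝ} (hγ : 0 ≤ γ) (hm : 0 < m) (hK : γ < K)
    (hdet : α ^ 2 ≤ (K - γ) * (K - m)) (p q : ℝ) :
    (γ * p + α * q) ^ 2 + (α * p + m * q) ^ 2 ≤ K ^ 2 * (p ^ 2 + q ^ 2) := by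
  have hK0 : 0 < K := by linarith
  have hdet' : α ^ 2 ≤ (K + γ) * (K + m) := by nlinarith
  have hdet'' : (-α) ^ 2 ≤ (K - γ) * (K - m) := by rwa [neg_sq]
  -- `2K(K² - B²) = (K - B)(K + B)(K - B) + (K + B)(K - B)(K + B)`
  have h1 := quadForm_nonneg (by linarith : 0 < K + γ) hdet'
    ((K - γ) * p - α * q) (-α * p + (K - m) * q)
  have h2 := quadForm_nonneg (by linarith : 0 < K - γ) hdet''
    ((K + γ) * p + α * q) (α * p + (K + m) * q)
  have h3 : 0 ≤ (2 * K) *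
      (K ^ 2 * (p ^ 2 + q ^ 2) - ((γ * p + α * q) ^ 2 + (α * p + m * q) ^ 2)) := by
    refine (add_nonneg h1 h2).trans_eq ?_
    ring
  linarith [nonneg_of_mul_nonneg_right h3 (by linarith : 0 < 2 * K)]

lemma bordered_corner_lt {γ m : ℝ} (α : ℝ) (hm : 0 < m) :
    γ < m + γ / 2 + (α ^ 2 + γ ^ 2 / 8) / m := by
  have h : m + γ / 2 + (α ^ 2 + γ ^ 2 / 8) / m - γ
      = ((m - γ / 4) ^ 2 + γ ^ 2 / 16 + α ^ 2) / m := by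
    field_simp
    ring
  have h0 : 0 < (m - γ / 4) ^ 2 + γ ^ 2 / 16 + α ^ 2 := by
    rcases eq_or_ne γ 0 with rfl | hγ
    · ring_nf; positivity
    · positivity
  have := div_pos h0 hm
  linarith

lemma bordered_det_bound {γ m : ℝ} (α : ℝ) (hγ : 0 ≤ γ) (hm : 0 < m) :
    α ^ 2 ≤ (m + γ / 2 + (α ^ 2 + γ ^ 2 / 8) / m - γ) *
      (m + γ / 2 + (α ^ 2 + γ ^ 2 / 8) / m - m) := by
  obtain ⟨s, hs⟩ : ∃ s, s = α ^ 2 / m := ⟨_, rfl⟩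
  obtain ⟨t, ht⟩ : ∃ t, t = γ ^ 2 / 8 / m := ⟨_, rfl⟩
  have hs0 : 0 ≤ s := hs ▸ by positivity
  have ht0 : 0 ≤ t := ht ▸ by positivity
  have hsm : α ^ 2 = s * m := by rw [hs]; field_simp
  have hpos : 0 ≤ m - γ / 2 + t := by
    have := bordered_corner_lt (γ := γ) 0 hm
    have h0 : ((0 : ℝ) ^ 2 + γ ^ 2 / 8) / m = t := by rw [ht]; ring
    rw [h0] at this
    linarith
  rw [add_div, ← hs, ← ht, hsm]
  nlinarith [mul_nonneg hs0 ht0, sq_nonneg s,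
    mul_nonneg (by linarith : 0 ≤ γ / 2 + t) hpos]

/-- **Operator-norm bound after bordering (third form).**
With `A = [[c, a*], [a, M]]`, `M ≠ 0`, and `‖·‖` the `ℓ²`-operator (spectral) norm:
`‖A‖ ≤ ‖M‖ + |c|/2 + (‖a‖₂² + c²/8) / ‖M‖`. -/
theorem bordered_opNorm_le_third
    (d : ℕ) (hd : 0 < d)
    (M : Matrix (Fin d) (Fin d) ℂ) (hM : M.IsHermitian) (hM0 : M ≠ 0)
    (c : ℝ) (a : EuclideanSpace ℂ (Fin d))
    (A : Matrix (Unit ⊕ Fin d) (Unit ⊕ Fin d) ℂ)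
    (hA : A = Matrix.fromBlocks (Matrix.of fun _ _ => (c : ℂ))
        (Matrix.of fun _ j => star (a j)) (Matrix.of fun i _ => a i) M) :
    ‖Matrix.toEuclideanCLM (𝕜 := ℂ) A‖
      ≤ ‖Matrix.toEuclideanCLM (𝕜 := ℂ) M‖ + |c| / 2
        + (‖a‖ ^ 2 + c ^ 2 / 8) / ‖Matrix.toEuclideanCLM (𝕜 := ℂ) M‖ := by
  set m := ‖Matrix.toEuclideanCLM (𝕜 := ℂ) M‖ with hmdef
  have hm : 0 < m := by
    rw [hmdef, norm_pos_iff]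
    exact fun h => hM0 ((map_eq_zero_iff _ (Matrix.toEuclideanCLM (𝕜 := ℂ)).injective).1 h)
  rw [← sq_abs c]
  set K := m + |c| / 2 + (‖a‖ ^ 2 + |c| ^ 2 / 8) / m with hKdef
  have hKc : |c| < K := bordered_corner_lt ‖a‖ hm
  have hdet : ‖a‖ ^ 2 ≤ (K - |c|) * (K - m) := bordered_det_bound ‖a‖ (abs_nonneg c) hm
  refine ContinuousLinearMap.opNorm_le_bound _ ((abs_nonneg c).trans hKc.le) fun x => ?_
  have hK0 : 0 ≤ K := (abs_nonneg c).trans hKc.le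
  refine (sq_le_sq₀ (norm_nonneg _) (mul_nonneg hK0 (norm_nonneg _))).1 ?_
  obtain ⟨u, hu⟩ : ∃ u : ℂ, u = x (Sum.inl ()) := ⟨_, rfl⟩
  obtain ⟨v, hv⟩ : ∃ v : EuclideanSpace ℂ (Fin d), v = WithLp.toLp 2 fun i => x (Sum.inr i) :=
    ⟨_, rfl⟩
  have hx : ‖x‖ ^ 2 = ‖u‖ ^ 2 + ‖v‖ ^ 2 := by
    rw [EuclideanSpace.norm_sq_eq, EuclideanSpace.norm_sq_eq, Fintype.sum_sum_type]
    simp [hu, hv]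
  have hAx : ‖Matrix.toEuclideanCLM (𝕜 := ℂ) A x‖ ^ 2
      = ‖(c : ℂ) * u + inner ℂ a v‖ ^ 2
        + ‖u • a + Matrix.toEuclideanCLM (𝕜 := ℂ) M v‖ ^ 2 := by
    rw [EuclideanSpace.norm_sq_eq, EuclideanSpace.norm_sq_eq, Fintype.sum_sum_type]
    subst hA hu hv
    simp [Matrix.ofLp_toEuclideanCLM, Matrix.mulVec, dotProduct, PiLp.inner_apply, mul_comm]
  have h1 : ‖(c : ℂ) * u + inner ℂ a v‖ ≤ |c| * ‖u‖ + ‖a‖ * ‖v‖ := by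
    refine (norm_add_le _ _).trans (add_le_add ?_ (norm_inner_le_norm a v))
    simp
  have h2 : ‖u • a + Matrix.toEuclideanCLM (𝕜 := ℂ) M v‖ ≤ ‖a‖ * ‖u‖ + m * ‖v‖ := by
    refine (norm_add_le _ _).trans (add_le_add ?_ (ContinuousLinearMap.le_opNorm _ v))
    rw [norm_smul, mul_comm]
  rw [hAx, mul_pow, hx]
  exact (add_le_add (pow_le_pow_left₀ (norm_nonneg _) h1 2)
    (pow_le_pow_left₀ (norm_nonneg _) h2 2)).trans
      (sq_norm_two_le (abs_nonneg c) hm hKc hdet ‖u‖ ‖v‖)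
end
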